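/- (Termination condition) For every positive semidefinite d×d matrix ρ with tr(ρ) = 1: t(ρ) = 1 if and only if the only vector of ℂ^d lying both in the reachable space H_R(ρ) and in PD is the zero vector. -/

import Mathlib

noncomputable section
open Matrix
open scoped ComplexOrder

variable {d m r : ℕ}

/-- One step of process `i`: `T_i(ρ) = E_i(M₁ ρ M₁†) = ∑_j (E_{i,j} M₁) ρ (E_{i,j} M₁)†`. -/
def Tstep (E : Fin m → Fin r → Matrix (Fin d) (Fin d) ℂ)
    (M1 : Matrix (Fin d) (Fin d) ℂ) (i : Fin m)
    (ρ : Matrix (Fin d) (Fin d) ℂ) : Matrix (Fin d) (Fin d) ℂ :=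
  ∑ j, (E i j * M1) * ρ * (E i j * M1)ᴴ

/-- `T_f` for a word `f = s₁⋯s_n`: apply `T_{s₁}` first, then `T_{s₂}`, …, `T_{s_n}`. -/
def Tword (E : Fin m → Fin r → Matrix (Fin d) (Fin d) ℂ)
    (M1 : Matrix (Fin d) (Fin d) ℂ) (f : List (Fin m))
    (ρ : Matrix (Fin d) (Fin d) ℂ) : Matrix (Fin d) (Fin d) ℂ :=
  f.foldl (fun σ k => Tstep E M1 k σ) ρ

/-- The support of a matrix: its column space, as a subspace of `ℂ^d`. -/
def supp (A : Matrix (Fin d) (Fin d) ℂ) : Submodule ℂ (Fin d → ℂ) :=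
  LinearMap.range (Matrix.toLin' A)

/-- Length-`n` prefix of a schedule. -/
def prefixn (s : ℕ → Fin m) (n : ℕ) : List (Fin m) :=
  List.ofFn (fun i : Fin n => s i)

/-- Termination probability within a word `f`. -/
def tWord (E : Fin m → Fin r → Matrix (Fin d) (Fin d) ℂ)
    (M0 M1 : Matrix (Fin d) (Fin d) ℂ) (f : List (Fin m))
    (ρ : Matrix (Fin d) (Fin d) ℂ) : ℝ :=
  ∑ n ∈ Finset.range (f.length + 1),
    (M0 * Tword E M1 (f.take n) ρ * M0ᴴ).trace.re

/-- Termination probability along a schedule `s`. -/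
def tSched (E : Fin m → Fin r → Matrix (Fin d) (Fin d) ℂ)
    (M0 M1 : Matrix (Fin d) (Fin d) ℂ) (s : ℕ → Fin m)
    (ρ : Matrix (Fin d) (Fin d) ℂ) : ℝ :=
  ∑' n : ℕ, (M0 * Tword E M1 (prefixn s n) ρ * M0ᴴ).trace.re

/-- Termination probability `t(ρ)`: infimum over all schedules. -/
def tInf (E : Fin m → Fin r → Matrix (Fin d) (Fin d) ℂ)
    (M0 M1 : Matrix (Fin d) (Fin d) ℂ)
    (ρ : Matrix (Fin d) (Fin d) ℂ) : ℝ :=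
  ⨅ s : ℕ → Fin m, tSched E M0 M1 s ρ

/-- The reachable space `H_{R(ρ)}`. -/
def HR (E : Fin m → Fin r → Matrix (Fin d) (Fin d) ℂ)
    (M1 : Matrix (Fin d) (Fin d) ℂ)
    (ρ : Matrix (Fin d) (Fin d) ℂ) : Submodule ℂ (Fin d → ℂ) :=
  ⨆ f : List (Fin m), supp (Tword E M1 f ρ)

/-- The average super-operator `T = (1/m) ∑ T_i`. -/
def Tavg (E : Fin m → Fin r → Matrix (Fin d) (Fin d) ℂ)
    (M1 : Matrix (Fin d) (Fin d) ℂ)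
    (ρ : Matrix (Fin d) (Fin d) ℂ) : Matrix (Fin d) (Fin d) ℂ :=
  ((m : ℂ)⁻¹) • ∑ i : Fin m, Tstep E M1 i ρ

/-- `H_{R̄_n(ρ)} = ⋁_{k=0}^n supp(T^k(ρ))`. -/
def HRbar (E : Fin m → Fin r → Matrix (Fin d) (Fin d) ℂ)
    (M1 : Matrix (Fin d) (Fin d) ℂ)
    (ρ : Matrix (Fin d) (Fin d) ℂ) (n : ℕ) : Submodule ℂ (Fin d → ℂ) :=
  ⨆ k : Fin (n + 1), supp ((Tavg E M1)^[k] ρ)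

/-- Reachable termination probability `h(ρ)`. -/
def hProb (E : Fin m → Fin r → Matrix (Fin d) (Fin d) ℂ)
    (M0 M1 : Matrix (Fin d) (Fin d) ℂ)
    (ρ : Matrix (Fin d) (Fin d) ℂ) : ℝ :=
  sInf { x : ℝ | ∃ σ : Matrix (Fin d) (Fin d) ℂ,
    σ.PosSemidef ∧ σ.trace = 1 ∧ supp σ ≤ HR E M1 ρ ∧ x = tInf E M0 M1 σ }

/-- `PD_f`: pure states diverging within the word `f`. -/
def PDword (E : Fin m → Fin r → Matrix (Fin d) (Fin d) ℂ)
    (M0 M1 : Matrix (Fin d) (Fin d) ℂ) (f : List (Fin m)) : Set (Fin d → ℂ) :=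
  { x : Fin d → ℂ | tWord E M0 M1 f (Matrix.vecMulVec x (star x)) = 0 }

/-- `PD_n`: union of `PD_f` over words of length `n`. -/
def PDn (E : Fin m → Fin r → Matrix (Fin d) (Fin d) ℂ)
    (M0 M1 : Matrix (Fin d) (Fin d) ℂ) (n : ℕ) : Set (Fin d → ℂ) :=
  { x : Fin d → ℂ | ∃ f : List (Fin m), f.length = n ∧ x ∈ PDword E M0 M1 f }

/-- `PD`: the diverging pure states. -/
def PD (E : Fin m → Fin r → Matrix (Fin d) (Fin d) ℂ)
    (M0 M1 : Matrix (Fin d) (Fin d) ℂ) : Set (Fin d → ℂ) :=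
  { x : Fin d → ℂ | ∃ s : ℕ → Fin m, tSched E M0 M1 s (Matrix.vecMulVec x (star x)) = 0 }

lemma aux_Tstep_add (E : Fin m → Fin r → Matrix (Fin d) (Fin d) ℂ)
    (M1 : Matrix (Fin d) (Fin d) ℂ) (i : Fin m) (a b : Matrix (Fin d) (Fin d) ℂ) :
    Tstep E M1 i (a + b) = Tstep E M1 i a + Tstep E M1 i b := by
  simp only [Tstep, Matrix.mul_add, Matrix.add_mul, Finset.sum_add_distrib]

lemma aux_Tstep_smul (E : Fin m → Fin r → Matrix (Fin d) (Fin d) ℂ)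
    (M1 : Matrix (Fin d) (Fin d) ℂ) (i : Fin m) (c : ℂ) (a : Matrix (Fin d) (Fin d) ℂ) :
    Tstep E M1 i (c • a) = c • Tstep E M1 i a := by
  simp only [Tstep, Matrix.mul_smul, Matrix.smul_mul, Finset.smul_sum]

lemma aux_Tword_append (E : Fin m → Fin r → Matrix (Fin d) (Fin d) ℂ)
    (M1 : Matrix (Fin d) (Fin d) ℂ) (f g : List (Fin m)) (a : Matrix (Fin d) (Fin d) ℂ) :
    Tword E M1 (f ++ g) a = Tword E M1 g (Tword E M1 f a) := by
  simp [Tword, List.foldl_append]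

lemma aux_Tword_add (E : Fin m → Fin r → Matrix (Fin d) (Fin d) ℂ)
    (M1 : Matrix (Fin d) (Fin d) ℂ) (f : List (Fin m)) : ∀ (a b : Matrix (Fin d) (Fin d) ℂ),
    Tword E M1 f (a + b) = Tword E M1 f a + Tword E M1 f b := by
  induction f with
  | nil => intro a b; rfl
  | cons i f ih =>
    intro a b
    change Tword E M1 f (Tstep E M1 i (a + b)) = Tword E M1 f (Tstep E M1 i a) + Tword E M1 f (Tstep E M1 i b)
    rw [aux_Tstep_add, ih]

lemma aux_Tword_smul (E : Fin m → Fin r → Matrix (Fin d) (Fin d) ℂ)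
    (M1 : Matrix (Fin d) (Fin d) ℂ) (f : List (Fin m)) (c : ℂ) :
    ∀ (a : Matrix (Fin d) (Fin d) ℂ),
    Tword E M1 f (c • a) = c • Tword E M1 f a := by
  induction f with
  | nil => intro a; rfl
  | cons i f ih =>
    intro a
    change Tword E M1 f (Tstep E M1 i (c • a)) = c • Tword E M1 f (Tstep E M1 i a)
    rw [aux_Tstep_smul, ih]

/-- The trace functional after a word, as a linear map. -/
def auxTL (E : Fin m → Fin r → Matrix (Fin d) (Fin d) ℂ)
    (M1 : Matrix (Fin d) (Fin d) ℂ) (f : List (Fin m)) :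
    Matrix (Fin d) (Fin d) ℂ →ₗ[ℂ] ℂ where
  toFun a := (Tword E M1 f a).trace
  map_add' a b := by rw [aux_Tword_add, Matrix.trace_add]
  map_smul' c a := by rw [aux_Tword_smul, Matrix.trace_smul]; rfl

lemma aux_Tstep_psd (E : Fin m → Fin r → Matrix (Fin d) (Fin d) ℂ)
    (M1 : Matrix (Fin d) (Fin d) ℂ) (i : Fin m) {a : Matrix (Fin d) (Fin d) ℂ}
    (ha : a.PosSemidef) : (Tstep E M1 i a).PosSemidef :=
  Matrix.posSemidef_sum _ (fun j _ => ha.mul_mul_conjTranspose_same _)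

lemma aux_Tword_psd (E : Fin m → Fin r → Matrix (Fin d) (Fin d) ℂ)
    (M1 : Matrix (Fin d) (Fin d) ℂ) (f : List (Fin m)) :
    ∀ {a : Matrix (Fin d) (Fin d) ℂ}, a.PosSemidef → (Tword E M1 f a).PosSemidef := by
  induction f with
  | nil => intro a ha; exact ha
  | cons i f ih => intro a ha; exact ih (aux_Tstep_psd E M1 i ha)

lemma aux_trace_nonneg {a : Matrix (Fin d) (Fin d) ℂ} (ha : a.PosSemidef) : 0 ≤ a.trace.re :=
  (Complex.le_def.1 ha.trace_nonneg).1

lemma aux_step_trace (E : Fin m → Fin r → Matrix (Fin d) (Fin d) ℂ)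
    (hE : ∀ i, ∑ j, (E i j)ᴴ * E i j = 1)
    (M0 M1 : Matrix (Fin d) (Fin d) ℂ)
    (hM : M0ᴴ * M0 + M1ᴴ * M1 = 1) (i : Fin m) (a : Matrix (Fin d) (Fin d) ℂ) :
    (M0 * a * M0ᴴ).trace + (Tstep E M1 i a).trace = a.trace := by
  have h1 : (Tstep E M1 i a).trace = (M1ᴴ * M1 * a).trace := by
    have : ∀ j, ((E i j * M1) * a * (E i j * M1)ᴴ).trace
        = (((E i j)ᴴ * E i j) * (M1 * a * M1ᴴ)).trace := by
      intro j
      rw [Matrix.conjTranspose_mul, Matrix.trace_mul_comm, Matrix.mul_assoc,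
        Matrix.trace_mul_comm]
      simp only [Matrix.mul_assoc]
    rw [Tstep, Matrix.trace_sum, Finset.sum_congr rfl (fun j _ => this j), ← Matrix.trace_sum,
      ← Finset.sum_mul, hE, Matrix.one_mul, Matrix.trace_mul_comm, Matrix.mul_assoc]
  rw [h1, Matrix.trace_mul_comm (M0 * a), ← Matrix.mul_assoc, ← Matrix.trace_add, ← Matrix.add_mul,
    hM, Matrix.one_mul]

lemma aux_prefix_succ (s : ℕ → Fin m) (n : ℕ) : prefixn s (n+1) = prefixn s n ++ [s n] := by
  rw [prefixn, List.ofFn_succ_last]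
  simp [prefixn]

lemma aux_prefix_add (s : ℕ → Fin m) (n k : ℕ) :
    prefixn s (n+k) = prefixn s n ++ prefixn (fun i => s (n+i)) k := by
  induction k with
  | zero => simp [prefixn]
  | succ k ih =>
    rw [← add_assoc, aux_prefix_succ, aux_prefix_succ, ih, List.append_assoc]

lemma aux_prefix_word (f : List (Fin m)) : ∀ (s : ℕ → Fin m),
    ∃ s' : ℕ → Fin m, ∀ n, prefixn s' (f.length + n) = f ++ prefixn s n := by
  induction f with
  | nil => intro s; exact ⟨s, fun n => by simp⟩
  | cons i f ih =>
    intro s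
    obtain ⟨s', h⟩ := ih s
    refine ⟨fun n => Nat.casesOn n i s', fun n => ?_⟩
    rw [List.cons_append, ← h n, List.length_cons,
      show f.length + 1 + n = (f.length + n) + 1 by omega]
    simp [prefixn, List.ofFn_succ]

lemma aux_term (E : Fin m → Fin r → Matrix (Fin d) (Fin d) ℂ)
    (hE : ∀ i, ∑ j, (E i j)ᴴ * E i j = 1)
    (M0 M1 : Matrix (Fin d) (Fin d) ℂ)
    (hM : M0ᴴ * M0 + M1ᴴ * M1 = 1) (s : ℕ → Fin m) (n : ℕ) (a : Matrix (Fin d) (Fin d) ℂ) :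
    (M0 * Tword E M1 (prefixn s n) a * M0ᴴ).trace.re =
      (auxTL E M1 (prefixn s n) a).re - (auxTL E M1 (prefixn s (n+1)) a).re := by
  have := congrArg Complex.re (aux_step_trace E hE M0 M1 hM (s n) (Tword E M1 (prefixn s n) a))
  rw [Complex.add_re] at this
  have h2 : auxTL E M1 (prefixn s (n+1)) a =
      (Tstep E M1 (s n) (Tword E M1 (prefixn s n) a)).trace := by
    rw [aux_prefix_succ]
    change (Tword E M1 _ a).trace = _
    rw [aux_Tword_append]; rfl
  rw [h2]
  change _ = (Tword E M1 (prefixn s n) a).trace.re - _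
  linarith

lemma aux_term_nonneg (E : Fin m → Fin r → Matrix (Fin d) (Fin d) ℂ)
    (M0 M1 : Matrix (Fin d) (Fin d) ℂ) (s : ℕ → Fin m) (n : ℕ) {a : Matrix (Fin d) (Fin d) ℂ}
    (ha : a.PosSemidef) : 0 ≤ (M0 * Tword E M1 (prefixn s n) a * M0ᴴ).trace.re :=
  aux_trace_nonneg ((aux_Tword_psd E M1 _ ha).mul_mul_conjTranspose_same _)

lemma aux_TL_nonneg (E : Fin m → Fin r → Matrix (Fin d) (Fin d) ℂ)
    (M1 : Matrix (Fin d) (Fin d) ℂ) (f : List (Fin m)) {a : Matrix (Fin d) (Fin d) ℂ}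
    (ha : a.PosSemidef) : 0 ≤ (auxTL E M1 f a).re :=
  aux_trace_nonneg (aux_Tword_psd E M1 _ ha)

lemma aux_TL_anti (E : Fin m → Fin r → Matrix (Fin d) (Fin d) ℂ)
    (hE : ∀ i, ∑ j, (E i j)ᴴ * E i j = 1)
    (M0 M1 : Matrix (Fin d) (Fin d) ℂ)
    (hM : M0ᴴ * M0 + M1ᴴ * M1 = 1) (s : ℕ → Fin m) {a : Matrix (Fin d) (Fin d) ℂ}
    (ha : a.PosSemidef) : Antitone (fun n => (auxTL E M1 (prefixn s n) a).re) := by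
  apply antitone_nat_of_succ_le
  intro n
  have := aux_term E hE M0 M1 hM s n a
  have := aux_term_nonneg E M0 M1 s n ha
  linarith

lemma aux_TL_zero (E : Fin m → Fin r → Matrix (Fin d) (Fin d) ℂ)
    (M1 : Matrix (Fin d) (Fin d) ℂ) (s : ℕ → Fin m) (a : Matrix (Fin d) (Fin d) ℂ) :
    auxTL E M1 (prefixn s 0) a = a.trace := by
  simp [auxTL, prefixn, Tword]

lemma aux_hasSum (E : Fin m → Fin r → Matrix (Fin d) (Fin d) ℂ)
    (hE : ∀ i, ∑ j, (E i j)ᴴ * E i j = 1)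
    (M0 M1 : Matrix (Fin d) (Fin d) ℂ)
    (hM : M0ᴴ * M0 + M1ᴴ * M1 = 1) (s : ℕ → Fin m) {a : Matrix (Fin d) (Fin d) ℂ}
    (ha : a.PosSemidef) :
    HasSum (fun n : ℕ => (M0 * Tword E M1 (prefixn s n) a * M0ᴴ).trace.re) (tSched E M0 M1 s a) ∧
    Filter.Tendsto (fun n => (auxTL E M1 (prefixn s n) a).re) Filter.atTop
      (nhds (a.trace.re - tSched E M0 M1 s a)) := by
  have hsum : ∀ n, ∑ k ∈ Finset.range n, (M0 * Tword E M1 (prefixn s k) a * M0ᴴ).trace.re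
      = a.trace.re - (auxTL E M1 (prefixn s n) a).re := by
    intro n
    rw [Finset.sum_congr rfl (fun k _ => aux_term E hE M0 M1 hM s k a),
      Finset.sum_range_sub', aux_TL_zero]
  have hs : Summable (fun n : ℕ => (M0 * Tword E M1 (prefixn s n) a * M0ᴴ).trace.re) := by
    apply summable_of_sum_range_le (c := a.trace.re) (fun n => aux_term_nonneg E M0 M1 s n ha)
    intro n
    rw [hsum]
    have := aux_TL_nonneg E M1 (prefixn s n) ha
    linarith
  have hh : HasSum (fun n : ℕ => (M0 * Tword E M1 (prefixn s n) a * M0ᴴ).trace.re)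
    (tSched E M0 M1 s a) := hs.hasSum
  refine ⟨hh, ?_⟩
  have := (hh.tendsto_sum_nat).const_sub a.trace.re
  simpa [hsum] using this

lemma aux_rank1_psd (x : Fin d → ℂ) : (Matrix.vecMulVec x (star x)).PosSemidef :=
  Matrix.posSemidef_vecMulVec_self_star x

/-- Decomposition of a positive semidefinite matrix. -/
lemma aux_decomp {a : Matrix (Fin d) (Fin d) ℂ} (ha : a.PosSemidef) :
    ∃ b : Fin d → (Fin d → ℂ), a = ∑ k, Matrix.vecMulVec (b k) (star (b k)) ∧
      supp a = Submodule.span ℂ (Set.range b) := by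
  have hex : ∃ B : Matrix (Fin d) (Fin d) ℂ, a = Bᴴ * B := by
    open scoped MatrixOrder Matrix.Norms.L2Operator in
    exact CStarAlgebra.nonneg_iff_eq_star_mul_self.mp ha.nonneg
  obtain ⟨B, hB⟩ := hex
  have hr : supp a = LinearMap.range (Matrix.mulVecLin Bᴴ) := by
    have hle : LinearMap.range (Matrix.mulVecLin (Bᴴ * B)) ≤ LinearMap.range (Matrix.mulVecLin Bᴴ) := by
      rw [Matrix.mulVecLin_mul]; exact LinearMap.range_comp_le_range _ _
    rw [hB]
    apply Submodule.eq_of_le_of_finrank_eq hle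
    have := Matrix.rank_conjTranspose_mul_self B
    rw [← Matrix.rank_conjTranspose B] at this
    exact this
  refine ⟨fun k => Bᴴ.col k, ?_, ?_⟩
  · rw [hB]
    ext i j
    simp [Matrix.mul_apply, Matrix.sum_apply, Matrix.vecMulVec_apply]
  · rw [hr, Matrix.range_mulVecLin]

lemma aux_parallelogram (x y : Fin d → ℂ) :
    Matrix.vecMulVec (x + y) (star (x + y)) + Matrix.vecMulVec (x - y) (star (x - y)) =
      (2:ℂ) • Matrix.vecMulVec x (star x) + (2:ℂ) • Matrix.vecMulVec y (star y) := by
  ext i j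
  simp [Matrix.vecMulVec_apply]
  ring

lemma aux_smul (c : ℂ) (x : Fin d → ℂ) :
    Matrix.vecMulVec (c • x) (star (c • x)) = ((Complex.normSq c : ℝ) : ℂ) • Matrix.vecMulVec x (star x) := by
  ext i j
  simp [Matrix.vecMulVec_apply, Complex.normSq_eq_conj_mul_self]
  ring

lemma aux_trace_pos (x : Fin d → ℂ) (hx : x ≠ 0) : 0 < (Matrix.vecMulVec x (star x)).trace.re := by
  rw [Matrix.trace_vecMulVec, dotProduct_comm]
  exact (Complex.lt_def.1 (Matrix.dotProduct_star_self_pos_iff.2 hx)).1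

lemma aux_TL_smul (E : Fin m → Fin r → Matrix (Fin d) (Fin d) ℂ)
    (M1 : Matrix (Fin d) (Fin d) ℂ) (f : List (Fin m)) (c : ℂ) (x : Fin d → ℂ) :
    (auxTL E M1 f (Matrix.vecMulVec (c • x) (star (c • x)))).re =
      Complex.normSq c * (auxTL E M1 f (Matrix.vecMulVec x (star x))).re := by
  rw [aux_smul, map_smul, smul_eq_mul, Complex.re_ofReal_mul]

/-- Vectors whose survival probability along `s` tends to zero. -/
def auxZ (E : Fin m → Fin r → Matrix (Fin d) (Fin d) ℂ)
    (M1 : Matrix (Fin d) (Fin d) ℂ) (s : ℕ → Fin m) : Submodule ℂ (Fin d → ℂ) where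
  carrier := {x | Filter.Tendsto
    (fun n => (auxTL E M1 (prefixn s n) (Matrix.vecMulVec x (star x))).re) Filter.atTop (nhds 0)}
  zero_mem' := by
    simp
  add_mem' := by
    intro x y hx hy
    have h := (hx.const_mul 2).add (hy.const_mul 2)
    simp only [mul_zero, add_zero] at h
    refine squeeze_zero (fun n => aux_TL_nonneg E M1 _ (aux_rank1_psd _)) (fun n => ?_) h
    have h1 := congrArg (fun a => (auxTL E M1 (prefixn s n) a).re) (aux_parallelogram x y)
    simp only [map_add, map_smul, Complex.add_re, smul_eq_mul] at h1
    have h2 := aux_TL_nonneg E M1 (prefixn s n) (aux_rank1_psd (x - y))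
    simp at h1 h2 ⊢
    linarith
  smul_mem' := by
    intro c x hx
    have h := hx.const_mul (Complex.normSq c)
    simp only [mul_zero] at h
    refine h.congr (fun n => ?_)
    rw [aux_TL_smul]

lemma aux_cont (E : Fin m → Fin r → Matrix (Fin d) (Fin d) ℂ)
    (M1 : Matrix (Fin d) (Fin d) ℂ) (n : ℕ) :
    Continuous (fun p : (Fin d → ℂ) × (ℕ → Fin m) =>
      Tword E M1 (prefixn p.2 n) (Matrix.vecMulVec p.1 (star p.1))) := by
  induction n with
  | zero =>
    simp only [prefixn, List.ofFn_zero, Tword, List.foldl_nil]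
    fun_prop
  | succ n ih =>
    have h : Continuous (fun q : Fin m × Matrix (Fin d) (Fin d) ℂ => Tstep E M1 q.1 q.2) := by
      rw [continuous_prod_of_discrete_left]
      intro i
      unfold Tstep
      fun_prop
    have h2 : Continuous (fun p : (Fin d → ℂ) × (ℕ → Fin m) => (p.2 n,
      Tword E M1 (prefixn p.2 n) (Matrix.vecMulVec p.1 (star p.1)))) := by
      refine Continuous.prodMk ?_ ih
      fun_prop
    refine (h.comp h2).congr (fun p => ?_)
    rw [aux_prefix_succ, aux_Tword_append]; rfl

lemma aux_contract (E : Fin m → Fin r → Matrix (Fin d) (Fin d) ℂ)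
    (hE : ∀ i, ∑ j, (E i j)ᴴ * E i j = 1)
    (M0 M1 : Matrix (Fin d) (Fin d) ℂ)
    (hM : M0ᴴ * M0 + M1ᴴ * M1 = 1) (H : Submodule ℂ (Fin d → ℂ))
    (hH : ∀ x : Fin d → ℂ, x ∈ H → x ∈ PD E M0 M1 → x = 0) :
    ∃ N : ℕ, ∃ c : ℝ, 0 ≤ c ∧ c < 1 ∧ ∀ s : ℕ → Fin m, ∀ x ∈ H,
      (auxTL E M1 (prefixn s N) (Matrix.vecMulVec x (star x))).re ≤
        c * (Matrix.vecMulVec x (star x)).trace.re := by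
  let K : Set ((Fin d → ℂ) × (ℕ → Fin m)) := (Metric.sphere 0 1 ∩ H) ×ˢ Set.univ
  have hK : IsCompact K :=
    ((isCompact_sphere _ _).inter_right H.closed_of_finiteDimensional).prod isCompact_univ
  let U : ℕ → Set ((Fin d → ℂ) × (ℕ → Fin m)) := fun n =>
    {p | (auxTL E M1 (prefixn p.2 n) (Matrix.vecMulVec p.1 (star p.1))).re <
      (1 - 1/((n:ℝ)+1)) * (Matrix.vecMulVec p.1 (star p.1)).trace.re}
  have hUo : ∀ n, IsOpen (U n) := by
    intro n
    apply isOpen_lt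
    · exact Complex.continuous_re.comp (aux_cont E M1 n).matrix_trace
    · refine continuous_const.mul (Complex.continuous_re.comp (Continuous.matrix_trace ?_))
      fun_prop
  have hUm : Monotone U := by
    intro n k hnk p hp
    have h1 := aux_TL_anti E hE M0 M1 hM p.2 (aux_rank1_psd p.1) hnk
    have h2 := aux_trace_nonneg (aux_rank1_psd p.1)
    have h3 : 1/((k:ℝ)+1) ≤ 1/((n:ℝ)+1) := Nat.one_div_le_one_div hnk
    simp only [U, Set.mem_ofPred_eq] at hp h1 ⊢
    nlinarith
  have hcov : K ⊆ ⋃ n, U n := by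
    rintro ⟨x, s⟩ ⟨⟨hx1, hxH⟩, -⟩
    have hx0 : x ≠ 0 := by
      rintro rfl
      simp at hx1
    have he := aux_trace_pos x hx0
    have hex : ∃ n, (auxTL E M1 (prefixn s n) (Matrix.vecMulVec x (star x))).re <
        (Matrix.vecMulVec x (star x)).trace.re := by
      by_contra! hcon
      apply hx0
      apply hH x hxH
      refine ⟨s, ?_⟩
      have heq : ∀ n, (auxTL E M1 (prefixn s n) (Matrix.vecMulVec x (star x))).re =
        (Matrix.vecMulVec x (star x)).trace.re := by
        intro n
        refine le_antisymm ?_ (hcon n)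
        have := aux_TL_anti E hE M0 M1 hM s (aux_rank1_psd x) (Nat.zero_le n)
        simp only [aux_TL_zero] at this
        exact this
      unfold tSched
      simp [aux_term E hE M0 M1 hM, heq]
    obtain ⟨n, hn⟩ := hex
    set e := (Matrix.vecMulVec x (star x)).trace.re with hedef
    obtain ⟨k, hk⟩ := exists_nat_one_div_lt (div_pos (sub_pos.2 hn) he)
    rw [Set.mem_iUnion]
    refine ⟨max n k, ?_⟩
    have h1 := aux_TL_anti E hE M0 M1 hM s (aux_rank1_psd x) (le_max_left n k)
    have h3 : 1/(((max n k : ℕ):ℝ)+1) ≤ 1/((k:ℝ)+1) := Nat.one_div_le_one_div (le_max_right n k)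
    have h4 := lt_of_le_of_lt h3 hk
    rw [lt_div_iff₀ he] at h4
    simp only [U, Set.mem_ofPred_eq] at h1 ⊢
    rw [← hedef]
    linarith
  obtain ⟨N, hN⟩ := hK.elim_directed_cover U hUo hcov hUm.directed_le
  have hpos : 0 < 1/((N:ℝ)+1) := by positivity
  have hle : 1/((N:ℝ)+1) ≤ 1 := by
    rw [div_le_one (by positivity)]
    have : (0:ℝ) ≤ N := by positivity
    linarith
  refine ⟨N, 1 - 1/((N:ℝ)+1), by linarith, by linarith, ?_⟩
  intro s x hx
  by_cases hx0 : x = 0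
  · subst hx0; simp
  have hn : 0 < ‖x‖ := norm_pos_iff.2 hx0
  let c : ℂ := ((‖x‖⁻¹ : ℝ) : ℂ)
  have hc : c ≠ 0 := by simp [c, hx0]
  have hmem : ((c • x, s) : (Fin d → ℂ) × (ℕ → Fin m)) ∈ K := by
    refine ⟨⟨?_, H.smul_mem _ hx⟩, trivial⟩
    simp [c, norm_smul, hn.ne']
  have h := hN hmem
  simp only [U, Set.mem_ofPred_eq] at h
  rw [aux_TL_smul, aux_smul, Matrix.trace_smul, smul_eq_mul, Complex.re_ofReal_mul] at h
  have hp : 0 < Complex.normSq c := Complex.normSq_pos.2 hc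
  refine le_of_mul_le_mul_left ?_ hp
  linarith

lemma aux_contract_psd (E : Fin m → Fin r → Matrix (Fin d) (Fin d) ℂ)
    (M1 : Matrix (Fin d) (Fin d) ℂ) (H : Submodule ℂ (Fin d → ℂ)) (f : List (Fin m)) (c : ℝ)
    (h : ∀ x ∈ H, (auxTL E M1 f (Matrix.vecMulVec x (star x))).re ≤
        c * (Matrix.vecMulVec x (star x)).trace.re)
    {a : Matrix (Fin d) (Fin d) ℂ} (ha : a.PosSemidef) (hs : supp a ≤ H) :
    (auxTL E M1 f a).re ≤ c * a.trace.re := by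
  obtain ⟨b, hb, hsp⟩ := aux_decomp ha
  rw [hb, map_sum, Matrix.trace_sum, Complex.re_sum, Complex.re_sum, Finset.mul_sum]
  refine Finset.sum_le_sum (fun k _ => h _ (hs ?_))
  rw [hsp]
  exact Submodule.subset_span ⟨k, rfl⟩

/-- Termination condition: `t(ρ) = 1` iff the only vector lying in both the
reachable space `H_R(ρ)` and `PD` is `0`. -/
theorem termination_condition (d m r : ℕ) (hd : 0 < d) (hm : 0 < m)
    (E : Fin m → Fin r → Matrix (Fin d) (Fin d) ℂ)
    (hE : ∀ i, ∑ j, (E i j)ᴴ * E i j = 1)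
    (M0 M1 : Matrix (Fin d) (Fin d) ℂ)
    (hM : M0ᴴ * M0 + M1ᴴ * M1 = 1)
    (ρ : Matrix (Fin d) (Fin d) ℂ) (hρ : ρ.PosSemidef) (htr : ρ.trace = 1) :
    tInf E M0 M1 ρ = 1 ↔
      ∀ x : Fin d → ℂ, x ∈ HR E M1 ρ → x ∈ PD E M0 M1 → x = 0 := by
  have : Nonempty (Fin m) := ⟨⟨0, hm⟩⟩
  have htr' : ρ.trace.re = 1 := by rw [htr]; rfl
  constructor
  · intro ht x hxH hxP
    have hbdd : BddBelow (Set.range (fun s : ℕ → Fin m => tSched E M0 M1 s ρ)) := by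
      refine ⟨0, ?_⟩
      rintro _ ⟨s, rfl⟩
      exact tsum_nonneg (fun n => aux_term_nonneg E M0 M1 s n hρ)
    have hall : ∀ s : ℕ → Fin m, Filter.Tendsto (fun n => (auxTL E M1 (prefixn s n) ρ).re)
        Filter.atTop (nhds 0) := by
      intro s
      have h1 : 1 ≤ tSched E M0 M1 s ρ := by rw [← ht]; exact ciInf_le hbdd s
      have h2 := (aux_hasSum E hE M0 M1 hM s hρ).2
      have h3 := ge_of_tendsto' h2 (fun n => aux_TL_nonneg E M1 (prefixn s n) hρ)
      have h4 : ρ.trace.re - tSched E M0 M1 s ρ = 0 := by linarith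
      rwa [h4] at h2
    obtain ⟨s, hs⟩ := hxP
    have hZ : HR E M1 ρ ≤ auxZ E M1 s := by
      refine iSup_le (fun f => ?_)
      have hpsd := aux_Tword_psd E M1 f hρ
      obtain ⟨b, hb, hsp⟩ := aux_decomp hpsd
      rw [hsp, Submodule.span_le]
      rintro _ ⟨k, rfl⟩
      obtain ⟨s', hs'⟩ := aux_prefix_word f s
      have h1 := (hall s').comp (Filter.tendsto_add_atTop_nat f.length)
      refine squeeze_zero (fun n => aux_TL_nonneg E M1 _ (aux_rank1_psd _)) (fun n => ?_) h1
      have h2 : auxTL E M1 (prefixn s' (n + f.length)) ρ =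
          ∑ k, auxTL E M1 (prefixn s n) (Matrix.vecMulVec (b k) (star (b k))) := by
        rw [← map_sum, ← hb, add_comm, hs' n]
        change (Tword E M1 _ ρ).trace = _
        rw [aux_Tword_append]; rfl
      simp only [Function.comp_apply]
      rw [h2, Complex.re_sum]
      exact Finset.single_le_sum
        (f := fun k => (auxTL E M1 (prefixn s n) (Matrix.vecMulVec (b k) (star (b k)))).re)
        (fun i _ => aux_TL_nonneg E M1 _ (aux_rank1_psd _)) (Finset.mem_univ k)
    have h0 : Filter.Tendsto
      (fun n => (auxTL E M1 (prefixn s n) (Matrix.vecMulVec x (star x))).re)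
      Filter.atTop (nhds 0) := hZ hxH
    have h1 := (aux_hasSum E hE M0 M1 hM s (aux_rank1_psd x)).2
    have h2 := tendsto_nhds_unique h0 h1
    rw [hs, sub_zero] at h2
    by_contra hx0
    exact absurd (aux_trace_pos x hx0) (by rw [← h2]; exact lt_irrefl _)
  · intro hH
    obtain ⟨N, c, hc0, hc1, hc⟩ := aux_contract E hE M0 M1 hM (HR E M1 ρ) hH
    have hall : ∀ s : ℕ → Fin m, tSched E M0 M1 s ρ = 1 := by
      intro s
      have hpow : ∀ k : ℕ, (auxTL E M1 (prefixn s (k * N)) ρ).re ≤ c ^ k := by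
        intro k
        induction k with
        | zero => rw [zero_mul, aux_TL_zero, htr', pow_zero]
        | succ k ih =>
          have h1 := aux_contract_psd E M1 (HR E M1 ρ) _ c (hc (fun i => s (k * N + i)))
            (aux_Tword_psd E M1 (prefixn s (k * N)) hρ)
            (le_iSup (fun f => supp (Tword E M1 f ρ)) (prefixn s (k * N)))
          have h2 : auxTL E M1 (prefixn s ((k + 1) * N)) ρ =
              auxTL E M1 (prefixn (fun i => s (k * N + i)) N)
                (Tword E M1 (prefixn s (k * N)) ρ) := by
            rw [add_mul, one_mul, aux_prefix_add]
            change (Tword E M1 _ ρ).trace = _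
            rw [aux_Tword_append]; rfl
          rw [h2, pow_succ']
          exact h1.trans (mul_le_mul_of_nonneg_left ih hc0)
      have h2 := (aux_hasSum E hE M0 M1 hM s hρ).2
      have h3 := ge_of_tendsto' h2 (fun n => aux_TL_nonneg E M1 (prefixn s n) hρ)
      have h4 : ∀ k : ℕ, ρ.trace.re - tSched E M0 M1 s ρ ≤ c ^ k := fun k =>
        ((aux_TL_anti E hE M0 M1 hM s hρ).le_of_tendsto h2 (k * N)).trans (hpow k)
      have h5 := ge_of_tendsto' (tendsto_pow_atTop_nhds_zero_of_lt_one hc0 hc1) h4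
      linarith
    unfold tInf
    simp [hall]
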